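/- For every $\alpha \in L$ one has $C(\alpha,\alpha) = 1$. -/

import Mathlib

/-!
Write `b j = ⟨νʲα, α⟩`. Since `ν` is an isometry of period `k`, the sequence `b` is symmetric under
`j ↦ k - j`. Averaging `∑ j b j` with its reflection gives `2 ∑ j b j = k U`, where
`U = ∑ b j - b 0`. As `η` is a primitive `k`-th root of unity, `η ^ (k U / 2) = (-1) ^ U`: for `k`
even `η ^ (k / 2) = -1`, and for `k` odd `U` must be even, so both sides are `1`. This cancels the
sign because `b 0 ^ 2 + ∑ b j` and `U` have the same parity.
-/

open Finset Function

theorem apply_iterate_iterate {X Y : Type*} {B : X → X → Y} {ν : X → X}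
    (hiso : ∀ x y, B (ν x) (ν y) = B x y) (n : ℕ) (x y : X) :
    B (ν^[n] x) (ν^[n] y) = B x y := by
  induction n with
  | zero => rfl
  | succ n ih => rw [iterate_succ_apply', iterate_succ_apply', hiso, ih]

theorem apply_iterate_sub_self {X Y : Type*} {B : X → X → Y} {ν : X → X}
    (hsymm : ∀ x y, B x y = B y x) (hiso : ∀ x y, B (ν x) (ν y) = B x y)
    {k j : ℕ} {x : X} (hx : IsPeriodicPt ν k x) (hj : j ≤ k) :
    B (ν^[k - j] x) x = B (ν^[j] x) x :=
  calc B (ν^[k - j] x) x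
    _ = B (ν^[j] (ν^[k - j] x)) (ν^[j] x) := (apply_iterate_iterate hiso j _ _).symm
    _ = B x (ν^[j] x) := by rw [← iterate_add_apply, Nat.add_sub_cancel' hj, hx.eq]
    _ = B (ν^[j] x) x := hsymm _ _

theorem two_nsmul_sum_range_nsmul_of_reflect {M : Type*} [AddCommGroup M] {k : ℕ} {b : ℕ → M}
    (hb : ∀ j ≤ k, b (k - j) = b j) :
    2 • ∑ j ∈ range k, j • b j = k • (∑ j ∈ range k, b j - b 0) := by
  have hbk : b k = b 0 := by simpa using (hb k le_rfl).symm
  have h_reflect : ∑ j ∈ range (k + 1), j • b j = ∑ j ∈ range (k + 1), (k - j) • b j := by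
    rw [← sum_flip]
    exact sum_congr rfl fun j hj => by rw [hb j (mem_range_succ_iff.mp hj)]
  have h_double : 2 • ∑ j ∈ range (k + 1), j • b j = k • ∑ j ∈ range (k + 1), b j := by
    rw [two_nsmul]
    nth_rw 2 [h_reflect]
    rw [← sum_add_distrib, smul_sum]
    refine sum_congr rfl fun j hj => ?_
    rw [← add_nsmul, Nat.add_sub_cancel' (mem_range_succ_iff.mp hj)]
  rw [sum_range_succ, sum_range_succ, hbk, smul_add, smul_add, two_nsmul (k • b 0)] at h_double
  rw [smul_sub, eq_sub_iff_add_eq]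
  exact add_right_cancel ((add_assoc _ _ _).trans h_double)

theorem zpow_eq_neg_one_zpow_of_two_mul_eq {K : Type*} [Field K] {η : K} {k : ℕ}
    (hη : IsPrimitiveRoot η k) (hk : 0 < k) {t u : ℤ} (h : 2 * t = k * u) :
    η ^ t = (-1) ^ u := by
  rcases k.even_or_odd with ⟨m, rfl⟩ | hk_odd
  · have h_half : η ^ m = -1 := (hη.pow hk (mul_two m).symm).eq_neg_one_of_two_right
    have ht : t = m * u := by push_cast at h; linarith
    rw [ht, zpow_mul, zpow_natCast, h_half]
  · have hu : Even u := by
      have h_even : Even ((k : ℤ) * u) := h ▸ even_two_mul t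
      exact (Int.even_mul.mp h_even).resolve_left (by simpa using hk_odd)
    obtain ⟨s, rfl⟩ := hu
    have ht : t = k * s := by linarith
    rw [ht, zpow_mul, zpow_natCast, hη.pow_eq_one, one_zpow, (Even.add_self s).neg_one_zpow]

theorem stmt_5_general {K X : Type*} [Field K] (B : X → X → ℤ) (hsymm : ∀ a b, B a b = B b a)
    (k : ℕ) (hk : 0 < k) (ν : X → X) (hiso : ∀ a b, B (ν a) (ν b) = B a b)
    (η : K) (hη : IsPrimitiveRoot η k) (C : X → X → K)
    (hC : ∀ a b, C a b =
      (-1) ^ (B a a * B b b + ∑ j ∈ range k, B (ν^[j] a) b) *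
        η ^ (∑ j ∈ range k, (j : ℤ) * B (ν^[j] a) b))
    {α : X} (hα : IsPeriodicPt ν k α) :
    C α α = 1 := by
  have h_two_mul : 2 * ∑ j ∈ range k, (j : ℤ) * B (ν^[j] α) α =
      k * (∑ j ∈ range k, B (ν^[j] α) α - B α α) := by
    simpa only [nsmul_eq_mul, Nat.cast_ofNat, iterate_zero_apply] using
      two_nsmul_sum_range_nsmul_of_reflect (b := fun j => B (ν^[j] α) α) fun _ =>
        apply_iterate_sub_self hsymm hiso hα
  rw [hC, zpow_eq_neg_one_zpow_of_two_mul_eq hη hk h_two_mul,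
    ← zpow_add₀ (neg_ne_zero.mpr one_ne_zero)]
  refine Even.neg_one_zpow ?_
  obtain ⟨r, hr⟩ := Int.even_mul_pred_self (B α α)
  exact ⟨r + ∑ j ∈ range k, B (ν^[j] α) α, by linear_combination hr⟩

theorem stmt_5 (L : Type*) [AddCommGroup L] [Module ℤ L]
    [Module.Free ℤ L] [Module.Finite ℤ L]
    (B : L →ₗ[ℤ] L →ₗ[ℤ] ℤ) (hsymm : ∀ a b : L, B a b = B b a)
    (k : ℕ) (hk : 0 < k)
    (ν : L ≃ₗ[ℤ] L) (hiso : ∀ a b : L, B (ν a) (ν b) = B a b)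
    (hper : ν ^ k = 1)
    (η : ℂ) (hη : IsPrimitiveRoot η k)
    (C : L → L → ℂ)
    (hC : ∀ a b : L, C a b =
      (-1 : ℂ) ^ (B a a * B b b + ∑ j ∈ Finset.range k, B ((ν ^ j) a) b) *
        η ^ (∑ j ∈ Finset.range k, (j : ℤ) * B ((ν ^ j) a) b)) :
    ∀ α : L, C α α = 1 := by
  simp only [LinearEquiv.coe_pow] at hC
  refine fun α => stmt_5_general (fun a b => B a b) hsymm k hk ν hiso η hη C hC ?_
  exact (ν.pow_apply k α).symm.trans (LinearEquiv.congr_fun hper α)
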